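/- arXiv:2604.04907 — 2 statements merged into one kernel-verified Lean document; each statement's English description precedes it below -/
import Mathlib

section
/- For the grid R_{r,s} = P_r □ P_s (the Cartesian product of paths on r and s vertices), gpn(R_{r,s}) = 2·binom(r+s+2, r+1) − 2r − 2s − 4 − (rs/2)·(r + s + 4). -/
/-!
A geodesic of a Cartesian product `G □ H` is a shuffle of a geodesic of `G` and one of `H`, so the
number of geodesics is the product of the two numbers times a binomial coefficient
(`numGeodesics_boxProd`). The shuffle is obtained algebraically: geodesics are counted by powers of
the adjacency matrix, and the adjacency matrix of `G □ H` is a sum of two commuting matrices, so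
the binomial theorem applies; below the distance all entries vanish, which leaves a single term.
In a path there is exactly one geodesic between any two vertices, so in the grid the vertices
`(a, b)` and `(c, d)` are joined by `(|a - c| + |b - d|).choose |a - c|` geodesics
(`numGeodesics_grid`).

It remains to sum over all pairs. Passing to ordered pairs (`two_mul_gpn`), the sum over one
coordinate reduces to partial sums over the distance in that coordinate (`sum_sum_dist`), and these
are evaluated by hockey-stick identities, giving `sum_numGeodesics_grid`.
-/

open SimpleGraph

/-- The number of geodesics (shortest paths) in `G` between `u` and `v`. -/
noncomputable def numGeodesics {V : Type*} (G : SimpleGraph V) (u v : V) : ℕ :=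
  {p : G.Walk u v | p.IsPath ∧ p.length = G.dist u v}.ncard

lemma numGeodesics_comm {V : Type*} (G : SimpleGraph V) (u v : V) :
    numGeodesics G u v = numGeodesics G v u := by
  have himg : {p : G.Walk v u | p.IsPath ∧ p.length = G.dist v u} =
      (fun p : G.Walk u v => p.reverse) '' {p : G.Walk u v | p.IsPath ∧ p.length = G.dist u v} := by
    ext p
    constructor
    · rintro ⟨hp, hl⟩
      exact ⟨p.reverse, ⟨hp.reverse, by
        rw [SimpleGraph.Walk.length_reverse, hl, SimpleGraph.dist_comm]⟩, p.reverse_reverse⟩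
    · rintro ⟨q, ⟨hq, hl⟩, rfl⟩
      exact ⟨hq.reverse, by rw [SimpleGraph.Walk.length_reverse, hl, SimpleGraph.dist_comm]⟩
  have hinj : Function.Injective (fun p : G.Walk u v => p.reverse) := by
    intro p q h
    simpa using congrArg SimpleGraph.Walk.reverse h
  unfold numGeodesics
  rw [himg, Set.ncard_image_of_injective _ hinj]

/-- The geodesic subpath number of a finite graph: the sum, over unordered pairs of
distinct vertices, of the number of geodesics between them, plus `n` for the `n`
geodesics of length zero. -/
noncomputable def gpn {V : Type*} [Fintype V] [DecidableEq V] (G : SimpleGraph V) : ℕ :=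
  (∑ e ∈ Finset.univ.filter (fun e : Sym2 V => ¬ e.IsDiag),
      Sym2.lift ⟨fun u v => numGeodesics G u v, fun u v => numGeodesics_comm G u v⟩ e)
    + Fintype.card V

/-! ### Geodesics in Cartesian products -/

open Finset Matrix in
/-- The adjacency matrix of `G □ H` is the Kronecker sum `A ⊗ 1 + 1 ⊗ B`, whose two summands
commute; this is the entrywise form of the binomial theorem for its powers. -/
lemma adjMatrix_boxProd_pow_apply {V W : Type*} [Fintype V] [Fintype W] [DecidableEq V]
    [DecidableEq W] (G : SimpleGraph V) (H : SimpleGraph W) [DecidableRel G.Adj]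
    [DecidableRel H.Adj] [DecidableRel (G □ H).Adj] (n : ℕ) (x y : V × W) :
    ((G □ H).adjMatrix ℕ ^ n) x y =
      ∑ m ∈ range (n + 1),
        (G.adjMatrix ℕ ^ m) x.1 y.1 * (H.adjMatrix ℕ ^ (n - m)) x.2 y.2 * n.choose m := by
  have hsum : (G □ H).adjMatrix ℕ =
      kroneckerMap (· * ·) (G.adjMatrix ℕ) (1 : Matrix W W ℕ) +
        kroneckerMap (· * ·) (1 : Matrix V V ℕ) (H.adjMatrix ℕ) := by
    ext ⟨a, b⟩ ⟨c, d⟩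
    by_cases h1 : a = c <;> by_cases h2 : b = d <;>
      simp [adjMatrix_apply, boxProd_adj, h1, h2]
  have hleft : ∀ k, kroneckerMap (· * ·) (G.adjMatrix ℕ) (1 : Matrix W W ℕ) ^ k =
      kroneckerMap (· * ·) (G.adjMatrix ℕ ^ k) (1 : Matrix W W ℕ) := by
    intro k
    induction k with
    | zero => simp
    | succ k ih => rw [pow_succ, ih, ← mul_kronecker_mul, pow_succ, one_mul]
  have hright : ∀ k, kroneckerMap (· * ·) (1 : Matrix V V ℕ) (H.adjMatrix ℕ) ^ k =
      kroneckerMap (· * ·) (1 : Matrix V V ℕ) (H.adjMatrix ℕ ^ k) := by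
    intro k
    induction k with
    | zero => simp
    | succ k ih => rw [pow_succ, ih, ← mul_kronecker_mul, pow_succ, one_mul]
  have hcomm : Commute (kroneckerMap (· * ·) (G.adjMatrix ℕ) (1 : Matrix W W ℕ))
      (kroneckerMap (· * ·) (1 : Matrix V V ℕ) (H.adjMatrix ℕ)) := by
    rw [Commute, SemiconjBy, ← mul_kronecker_mul, ← mul_kronecker_mul]
    simp
  rw [hsum, hcomm.add_pow, Matrix.sum_apply]
  refine sum_congr rfl fun m _ => ?_
  rw [hleft, hright, ← mul_kronecker_mul, mul_one, one_mul, ← nsmul_eq_mul', Matrix.smul_apply,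
    smul_eq_mul, mul_comm]
  rfl

/-- A walk whose length is the distance is automatically a path, so geodesics are counted by an
entry of a power of the adjacency matrix. -/
lemma numGeodesics_eq_adjMatrix_pow {V : Type*} [Fintype V] [DecidableEq V] (G : SimpleGraph V)
    [DecidableRel G.Adj] (u v : V) :
    numGeodesics G u v = (G.adjMatrix ℕ ^ G.dist u v) u v := by
  have hset : {p : G.Walk u v | p.IsPath ∧ p.length = G.dist u v} =
      {p : G.Walk u v | p.length = G.dist u v} := by
    ext p
    exact ⟨fun h => h.2, fun h => ⟨p.isPath_of_length_eq_dist h, h⟩⟩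
  rw [numGeodesics, hset, adjMatrix_pow_apply_eq_card_walk, ← Nat.card_coe_set_eq,
    Nat.card_eq_fintype_card]
  rfl

lemma adjMatrix_pow_eq_zero_of_lt_dist {V : Type*} [Fintype V] [DecidableEq V]
    (G : SimpleGraph V) [DecidableRel G.Adj] {u v : V} {k : ℕ} (hk : k < G.dist u v) :
    (G.adjMatrix ℕ ^ k) u v = 0 := by
  rw [adjMatrix_pow_apply_eq_card_walk]
  simp only [Nat.cast_id, Fintype.card_eq_zero_iff]
  exact ⟨fun p => absurd (dist_le p.1) (by rw [show p.1.length = k from p.2]; omega)⟩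

lemma dist_boxProd {V W : Type*} {G : SimpleGraph V} {H : SimpleGraph W}
    (hG : G.Preconnected) (hH : H.Preconnected) (x y : V × W) :
    (G □ H).dist x y = G.dist x.1 y.1 + H.dist x.2 y.2 := by
  rw [SimpleGraph.dist, edist_boxProd, ENat.toNat_add]
  · rfl
  · exact edist_ne_top_iff_reachable.2 (hG _ _)
  · exact edist_ne_top_iff_reachable.2 (hH _ _)

open Finset in
/-- A geodesic of `G □ H` is a shuffle of a geodesic of `G` with a geodesic of `H`: among the
terms of the binomial expansion only the one matching both distances survives. -/
lemma numGeodesics_boxProd {V W : Type*} [Fintype V] [Fintype W] {G : SimpleGraph V}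
    {H : SimpleGraph W} (hG : G.Preconnected) (hH : H.Preconnected) (x y : V × W) :
    numGeodesics (G □ H) x y =
      numGeodesics G x.1 y.1 * numGeodesics H x.2 y.2 *
        (G.dist x.1 y.1 + H.dist x.2 y.2).choose (G.dist x.1 y.1) := by
  classical
  rw [numGeodesics_eq_adjMatrix_pow, numGeodesics_eq_adjMatrix_pow, numGeodesics_eq_adjMatrix_pow,
    dist_boxProd hG hH, adjMatrix_boxProd_pow_apply, sum_eq_single (G.dist x.1 y.1)]
  · simp
  · intro m hm hne
    rw [mem_range] at hm
    rcases lt_or_gt_of_ne hne with h | h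
    · rw [adjMatrix_pow_eq_zero_of_lt_dist G h, zero_mul, zero_mul]
    · rw [adjMatrix_pow_eq_zero_of_lt_dist H (by omega), mul_zero, zero_mul]
  · intro h
    simp at h

/-! ### Path graphs and grids -/

/-- In a path graph, walks of length at most `|a - b|` from `a` to `b` are forced: there is
exactly one of length `|a - b|` and none shorter. -/
lemma adjMatrix_pathGraph_pow {r : ℕ} [DecidableRel (pathGraph r).Adj] (k : ℕ) (a b : Fin r)
    (hk : k ≤ Nat.dist a b) :
    ((pathGraph r).adjMatrix ℕ ^ k) a b = if k = Nat.dist a b then 1 else 0 := by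
  induction k generalizing a with
  | zero =>
    rw [pow_zero, Matrix.one_apply]
    refine if_congr ?_ rfl rfl
    rw [Fin.ext_iff]
    unfold Nat.dist
    omega
  | succ k ih =>
    rw [pow_succ', adjMatrix_mul_apply]
    have hstep : ∀ w ∈ (pathGraph r).neighborFinset a,
        ((pathGraph r).adjMatrix ℕ ^ k) w b = if k = Nat.dist w b then 1 else 0 := by
      intro w hw
      rw [mem_neighborFinset, pathGraph_adj] at hw
      refine ih w ?_
      unfold Nat.dist at hk ⊢
      omega
    rw [Finset.sum_congr rfl hstep]
    split_ifs with hd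
    · -- the only neighbour of `a` closer to `b` is one step towards `b`
      obtain ⟨w, hw⟩ : ∃ w : Fin r, (w : ℕ) = if (a : ℕ) < b then (a : ℕ) + 1 else a - 1 :=
        ⟨⟨if (a : ℕ) < b then (a : ℕ) + 1 else a - 1, by split_ifs <;> omega⟩, rfl⟩
      unfold Nat.dist at hd
      rw [Finset.sum_eq_single w]
      · rw [if_pos]
        unfold Nat.dist
        split_ifs at hw <;> omega
      · intro z hz hzw
        rw [mem_neighborFinset, pathGraph_adj] at hz
        rw [if_neg]
        rw [Ne, Fin.ext_iff] at hzw
        unfold Nat.dist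
        split_ifs at hw <;> omega
      · intro hn
        refine absurd ?_ hn
        rw [mem_neighborFinset, pathGraph_adj]
        split_ifs at hw <;> omega
    · refine Finset.sum_eq_zero fun w hw => ?_
      rw [mem_neighborFinset, pathGraph_adj] at hw
      rw [if_neg]
      unfold Nat.dist at *
      omega

lemma dist_pathGraph {r : ℕ} (a b : Fin r) : (pathGraph r).dist a b = Nat.dist a b := by
  classical
  refine le_antisymm ?_ ?_
  · by_contra! h
    have h1 := adjMatrix_pathGraph_pow (Nat.dist a b) a b le_rfl
    rw [adjMatrix_pow_eq_zero_of_lt_dist _ h] at h1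
    simp at h1
  · by_contra! h
    obtain ⟨p, hp⟩ := (pathGraph_preconnected r a b).exists_walk_length_eq_dist
    have h1 := adjMatrix_pathGraph_pow _ a b h.le
    rw [if_neg h.ne, adjMatrix_pow_apply_eq_card_walk, Nat.cast_id,
      Fintype.card_eq_zero_iff] at h1
    exact h1.false ⟨p, hp⟩

lemma numGeodesics_pathGraph {r : ℕ} (a b : Fin r) : numGeodesics (pathGraph r) a b = 1 := by
  classical
  rw [numGeodesics_eq_adjMatrix_pow, dist_pathGraph, adjMatrix_pathGraph_pow _ _ _ le_rfl,
    if_pos rfl]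

lemma numGeodesics_grid {r s : ℕ} (x y : Fin r × Fin s) :
    numGeodesics (pathGraph r □ pathGraph s) x y =
      (Nat.dist x.1 y.1 + Nat.dist x.2 y.2).choose (Nat.dist x.1 y.1) := by
  rw [numGeodesics_boxProd (pathGraph_preconnected r) (pathGraph_preconnected s),
    numGeodesics_pathGraph, numGeodesics_pathGraph, dist_pathGraph, dist_pathGraph, one_mul,
    one_mul]

/-! ### Summation over pairs of vertices -/

open Finset in
/-- Summing over ordered pairs counts each unordered pair of distinct vertices twice and each
trivial geodesic once, whereas `gpn` counts everything once. -/
lemma two_mul_gpn {V : Type*} [Fintype V] [DecidableEq V] (G : SimpleGraph V) :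
    2 * gpn G = ∑ u, ∑ v, numGeodesics G u v + Fintype.card V := by
  have hdiag : ∑ p ∈ (univ : Finset V).diag, numGeodesics G p.1 p.2 = Fintype.card V := by
    classical
    simp [sum_diag, numGeodesics_eq_adjMatrix_pow]
  have hoff : ∑ p ∈ (univ : Finset V).offDiag, numGeodesics G p.1 p.2 =
      2 * ∑ e ∈ univ.filter (fun e : Sym2 V => ¬ e.IsDiag),
        Sym2.lift ⟨fun u v => numGeodesics G u v, fun u v => numGeodesics_comm G u v⟩ e := by
    rw [← sum_fiberwise_of_maps_to (s := (univ : Finset V).offDiag)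
      (t := univ.filter (fun e : Sym2 V => ¬ e.IsDiag)) (g := fun p => s(p.1, p.2))
      (by simp), mul_sum]
    refine sum_congr rfl fun e he => ?_
    induction e with
    | h a b =>
      have hab : a ≠ b := by simpa using he
      have hfib : {p ∈ (univ : Finset V).offDiag | s(p.1, p.2) = s(a, b)} =
          {(a, b), (b, a)} := by
        ext ⟨c, d⟩
        simp only [mem_filter, mem_offDiag, mem_univ, true_and, Sym2.eq_iff, mem_insert,
          mem_singleton, Prod.mk.injEq]
        constructor
        · exact fun h => h.2
        · rintro (⟨rfl, rfl⟩ | ⟨rfl, rfl⟩)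
          · exact ⟨hab, by simp⟩
          · exact ⟨hab.symm, by simp⟩
      rw [hfib, sum_pair (by simp [hab])]
      simp [numGeodesics_comm G b a, two_mul]
  have hall : ∑ u, ∑ v, numGeodesics G u v =
      ∑ p ∈ (univ : Finset V).diag, numGeodesics G p.1 p.2 +
        ∑ p ∈ (univ : Finset V).offDiag, numGeodesics G p.1 p.2 := by
    rw [← sum_union (disjoint_diag_offDiag _), diag_union_offDiag, sum_product]
  rw [hall, hdiag, hoff, gpn]
  ring

open Finset in
/-- The pairs added when `Fin m` grows to `Fin (m + 1)` realise the distance `0` once and each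
distance `1, …, m` twice. -/
lemma sum_sum_dist (g : ℕ → ℤ) (r : ℕ) :
    ∑ a : Fin r, ∑ c : Fin r, g (Nat.dist a c) =
      ∑ m ∈ range r, (2 * ∑ k ∈ range (m + 1), g k - g 0) := by
  induction r with
  | zero => simp
  | succ r ih =>
    have hrow : ∑ a : Fin r, g (Nat.dist a r) = ∑ k ∈ range (r + 1), g k - g 0 := by
      rw [Fin.sum_univ_eq_sum_range (fun a => g (Nat.dist a r)), sum_range_succ',
        add_sub_cancel_right, ← sum_range_reflect]
      refine sum_congr rfl fun k hk => ?_
      rw [mem_range] at hk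
      congr 1
      unfold Nat.dist
      omega
    rw [sum_range_succ, ← ih]
    simp only [Fin.sum_univ_castSucc, sum_add_distrib, Fin.val_castSucc, Fin.val_last,
      Nat.dist_self]
    simp only [Nat.dist_comm r]
    rw [hrow]
    ring

open Finset in
/-- The hockey-stick identity along a column of binomial coefficients. -/
lemma sum_choose_column (k s : ℕ) :
    ∑ j ∈ range s, (((k + j).choose k : ℕ) : ℤ) = ((k + s).choose (k + 1) : ℕ) := by
  induction s with
  | zero => simp
  | succ s ih =>
    rw [sum_range_succ, ih, ← add_assoc, Nat.choose_succ_succ]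
    push_cast
    ring

open Finset in
/-- The hockey-stick identity along a diagonal. The first two entries of the diagonal, which are `1` and
`s` (at `k = -2` and `k = -1`), are missing from the sum and so are subtracted. -/
lemma sum_choose_diagonal (s n : ℕ) :
    ∑ k ∈ range n, (((k + s + 1).choose (k + 2) : ℕ) : ℤ) =
      ((n + s + 1).choose (n + 1) : ℕ) - 1 - s := by
  induction n with
  | zero => simp
  | succ n ih =>
    rw [sum_range_succ, ih, show n + 1 + s + 1 = (n + s + 1) + 1 by ring,
      Nat.choose_succ_succ (n + s + 1) (n + 1)]
    push_cast
    ring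

open Finset in
/-- The one-dimensional sum, for a fixed offset `k` in the other direction. -/
lemma sum_sum_choose_dist (k s : ℕ) :
    ∑ b : Fin s, ∑ d : Fin s, (((k + Nat.dist b d).choose k : ℕ) : ℤ) =
      2 * ((k + s + 1).choose (k + 2) : ℕ) - s := by
  rw [sum_sum_dist (fun j => (((k + j).choose k : ℕ) : ℤ))]
  simp only [sum_choose_column, sum_sub_distrib, ← mul_sum]
  have h := sum_choose_column (k + 1) s
  rw [show k + 1 + s = k + s + 1 by ring] at h
  rw [← h]
  simp [add_comm, add_left_comm]

open Finset in
lemma sum_numGeodesics_grid (r s : ℕ) :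
    ((∑ x, ∑ y, numGeodesics (pathGraph r □ pathGraph s) x y : ℕ) : ℤ) =
      4 * ((r + s + 2).choose (r + 1) : ℕ) - 4 * (r + s + 2) - r * s * (r + s + 5) := by
  have hswap : ((∑ x, ∑ y, numGeodesics (pathGraph r □ pathGraph s) x y : ℕ) : ℤ) =
      ∑ a : Fin r, ∑ c : Fin r, ∑ b : Fin s, ∑ d : Fin s,
        (((Nat.dist a c + Nat.dist b d).choose (Nat.dist a c) : ℕ) : ℤ) := by
    push_cast
    simp only [numGeodesics_grid, Fintype.sum_prod_type]
    exact sum_congr rfl fun a _ => sum_comm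
  rw [hswap]
  simp only [sum_sum_choose_dist]
  rw [sum_sum_dist (fun k => 2 * (((k + s + 1).choose (k + 2) : ℕ) : ℤ) - s)]
  simp only [sum_sub_distrib, ← mul_sum, sum_choose_diagonal]
  have hzero : ∀ n : ℕ, 2 * (((0 + n + 1).choose (0 + 2) : ℕ) : ℤ) = n * n + n := by
    intro n
    induction n with
    | zero => simp
    | succ n ih =>
      rw [show 0 + (n + 1) + 1 = (0 + n + 1) + 1 by ring, zero_add 2,
        Nat.choose_succ_succ (0 + n + 1) 1, Nat.choose_one_right]
      push_cast at ih ⊢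
      rw [mul_add, ih]
      ring
  have hgauss : 2 * ∑ m ∈ range r, ((m : ℤ) + 1) = r * (r + 1) := by
    clear hswap
    induction r with
    | zero => simp
    | succ r ih => rw [sum_range_succ, mul_add, ih]; push_cast; ring
  have hdiag := sum_choose_diagonal (s + 1) r
  have hcol : ∀ x, (((x + 1 + s + 1).choose (x + 1 + 1) : ℕ) : ℤ) =
      ((x + (s + 1) + 1).choose (x + 2) : ℕ) := by
    intro x
    rw [show x + 1 + s + 1 = x + (s + 1) + 1 by ring]
  simp only [hcol, hdiag, sum_const, card_range, nsmul_eq_mul]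
  rw [← sum_mul]
  push_cast at hgauss hzero ⊢
  rw [show r + (s + 1) + 1 = r + s + 2 by ring]
  linear_combination (-(s : ℤ)) * hgauss - (r : ℤ) * hzero s

/-- the geodesic subpath number of the grid `R_{r,s} = P_r □ P_s`. -/
theorem gpn_grid (r s : ℕ) (hr : 1 ≤ r) (hs : 1 ≤ s) :
    (gpn (SimpleGraph.pathGraph r □ SimpleGraph.pathGraph s) : ℝ) =
      2 * ((r + s + 2).choose (r + 1) : ℝ) - 2 * r - 2 * s - 4
        - ((r : ℝ) * s / 2) * ((r : ℝ) + s + 4) := by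
  have h1 := two_mul_gpn (pathGraph r □ pathGraph s)
  have h2 := sum_numGeodesics_grid r s
  rw [Fintype.card_prod, Fintype.card_fin, Fintype.card_fin] at h1
  have h3 : 2 * (gpn (pathGraph r □ pathGraph s) : ℤ) =
      4 * ((r + s + 2).choose (r + 1) : ℕ) - 4 * (r + s + 2) - r * s * (r + s + 5) + r * s := by
    rw [← h2]
    exact_mod_cast h1
  have h4 : 2 * (gpn (pathGraph r □ pathGraph s) : ℝ) =
      4 * ((r + s + 2).choose (r + 1) : ℕ) - 4 * (r + s + 2) - r * s * (r + s + 5) + r * s := by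
    exact_mod_cast h3
  linarith
end

section
/- Let G be a cactus graph on n vertices with k cycles. If G contains a cycle of odd length at least 5, then there exists a cactus graph G′ on n vertices with k cycles such that gpn(G′) > gpn(G). -/
/-!
Let `c 0, …, c (n - 1)` be an odd cycle of a cactus `G`, with `n = 2 m + 1 ≥ 5`. The graph `G'`
(`shortcut`) arises by replacing the edge from `c (-1)` to `c 0` by one from `c (-1)` to `c 1`: the
cycle becomes an even cycle of length `2 m`, with `c 0` pendant at `c 1`.

*Same cycles otherwise.* Let `H` be `G` without the edge from `c (-1)` to `c 0`. Since `G` is a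
cactus, the cycles of `G` are those of `H` and the given one. All paths of `H` from `c (-1)` to `c 1`
have the same edges (`path_edges_of_delete`), so joining these two vertices also creates exactly one
cycle (`cycleEdgeSets_sup_edge`), whose other edges come from the old cycle. Hence `G'` is a cactus
with as many cycles as `G` (`shortcut_isCactus`).

*More geodesics.* Removing the edges of the cycle from `G` leaves a graph `K` in which the `c i` lie
in distinct components (`ring_separated`), the branches, and every vertex lies in the branch of some
root `c i`. In both `G` and `G'`, geodesics inside a branch are those of `K`, and the number of
geodesics between different branches factors through the two roots (`numGeodesics_factor`). Between
distinct roots, `G` has a single geodesic because the two arcs of an odd cycle have different lengths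
(`ring_path_unique`), while `G'` has at least one, and two between `c 1` and its antipode `c (1 + m)`
(`two_le_numGeodesics_shortcut`). So no geodesic count drops and one grows.
-/


open SimpleGraph

/-- The cycles of `G`, recorded as their edge sets. -/
def cycleEdgeSets {V : Type*} (G : SimpleGraph V) : Set (Set (Sym2 V)) :=
  {s | ∃ (u : V) (c : G.Walk u u), c.IsCycle ∧ s = {e | e ∈ c.edges}}

/-- A cactus graph: a connected graph in which all cycles are pairwise edge-disjoint. -/
def IsCactus {V : Type*} (G : SimpleGraph V) : Prop :=
  G.Connected ∧ (cycleEdgeSets G).Pairwise Disjoint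

/-! ### Counting geodesics -/

lemma mem_geodesics_iff {V : Type*} {G : SimpleGraph V} {u v : V} (p : G.Walk u v) :
    (p.IsPath ∧ p.length = G.dist u v) ↔ p.length = G.dist u v :=
  ⟨fun h => h.2, fun h => ⟨p.isPath_of_length_eq_dist h, h⟩⟩

lemma finite_geodesics {V : Type*} [Fintype V] [DecidableEq V] (G : SimpleGraph V) (u v : V) :
    {p : G.Walk u v | p.IsPath ∧ p.length = G.dist u v}.Finite := by
  classical
  have : Finite (G.Path u v) := inferInstance
  have h : {p : G.Walk u v | p.IsPath}.Finite := Set.finite_coe_iff.1 this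
  exact h.subset fun p hp => hp.1

lemma one_le_numGeodesics {V : Type*} [Fintype V] [DecidableEq V] {G : SimpleGraph V}
    (hG : G.Connected) (u v : V) : 1 ≤ numGeodesics G u v := by
  obtain ⟨p, hp⟩ := hG.exists_path_of_dist u v
  exact (Set.ncard_pos (finite_geodesics G u v)).2 ⟨p, hp⟩

/-- If every path between `u` and `v` uses only edges of the subgraph `K`, then geodesics between
`u` and `v` may be counted in `K`. -/
lemma numGeodesics_eq_of_paths {V : Type*} {G K : SimpleGraph V} (hK : K ≤ G) (hG : G.Connected)
    {u v : V} (h : ∀ p : G.Walk u v, p.IsPath → ∀ e ∈ p.edges, e ∈ K.edgeSet) :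
    numGeodesics G u v = numGeodesics K u v := by
  have hd : G.dist u v = K.dist u v := by
    obtain ⟨p, hp, hl⟩ := hG.exists_path_of_dist u v
    have h1 : K.dist u v ≤ G.dist u v := by
      have := SimpleGraph.dist_le (p.transfer K (h p hp))
      rw [Walk.length_transfer] at this
      omega
    obtain ⟨q, hq⟩ := (p.transfer K (h p hp)).reachable.exists_walk_length_eq_dist
    have h2 := SimpleGraph.dist_le (q.mapLe hK)
    rw [Walk.length_mapLe] at h2
    omega
  unfold numGeodesics
  have himg : {p : G.Walk u v | p.IsPath ∧ p.length = G.dist u v} =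
      (fun p : K.Walk u v => p.mapLe hK) '' {p : K.Walk u v | p.IsPath ∧ p.length = K.dist u v} := by
    ext p
    constructor
    · rintro ⟨hp, hl⟩
      refine ⟨p.transfer K (h p hp), ⟨hp.transfer _, by rw [Walk.length_transfer, hl, hd]⟩, ?_⟩
      apply Walk.ext_support
      simp
    · rintro ⟨q, ⟨hq, hl⟩, rfl⟩
      exact ⟨hq.mapLe hK, by rw [Walk.length_mapLe, hl, hd]⟩
  rw [himg, Set.ncard_image_of_injective]
  intro p q hpq
  apply Walk.ext_support
  simpa using congrArg Walk.support hpq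

lemma append_inj_of_length_eq {V : Type*} {G : SimpleGraph V} {u x v : V}
    (p p' : G.Walk u x) (q q' : G.Walk x v) (hl : p.length = p'.length)
    (h : p.append q = p'.append q') : p = p' ∧ q = q' := by
  induction p with
  | nil =>
    cases p' with
    | nil => exact ⟨rfl, by simpa using h⟩
    | cons _ _ => simp at hl
  | cons a p ih =>
    cases p' with
    | nil => simp at hl
    | cons b p' =>
      simp only [Walk.cons_append, Walk.cons.injEq] at h
      obtain ⟨rfl, h⟩ := h
      obtain ⟨rfl, rfl⟩ := ih p' q q' (by simpa using hl) (eq_of_heq h)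
      exact ⟨rfl, rfl⟩

/-- Geodesic counts multiply across a vertex separating the two endpoints. -/
lemma numGeodesics_mul {V : Type*} [DecidableEq V] {G : SimpleGraph V} (hG : G.Connected)
    {u x v : V} (h : ∀ p : G.Walk u v, x ∈ p.support) :
    numGeodesics G u v = numGeodesics G u x * numGeodesics G x v := by
  have hd : G.dist u v = G.dist u x + G.dist x v := by
    refine le_antisymm hG.dist_triangle ?_
    obtain ⟨p, hp⟩ := hG.exists_walk_length_eq_dist u v
    have h1 := SimpleGraph.dist_le (p.takeUntil x (h p))
    have h2 := SimpleGraph.dist_le (p.dropUntil x (h p))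
    have h3 := congrArg Walk.length (p.take_spec (h p))
    rw [Walk.length_append] at h3
    omega
  unfold numGeodesics
  simp only [mem_geodesics_iff]
  rw [← Set.ncard_prod, ← Set.InjOn.ncard_image (f := fun pq : G.Walk u x × G.Walk x v =>
    pq.1.append pq.2)]
  · congr 1
    ext p
    simp only [Set.mem_ofPred_eq, Set.mem_image, Set.mem_prod, Prod.exists]
    constructor
    · intro hp
      refine ⟨p.takeUntil x (h p), p.dropUntil x (h p), ?_, p.take_spec _⟩
      have h1 := SimpleGraph.dist_le (p.takeUntil x (h p))
      have h2 := SimpleGraph.dist_le (p.dropUntil x (h p))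
      have h3 := congrArg Walk.length (p.take_spec (h p))
      rw [Walk.length_append] at h3
      omega
    · rintro ⟨a, b, ⟨ha, hb⟩, rfl⟩
      rw [Walk.length_append]
      omega
  · rintro ⟨a, b⟩ ⟨ha, hb⟩ ⟨a', b'⟩ ⟨ha', hb'⟩ hab
    obtain ⟨rfl, rfl⟩ := append_inj_of_length_eq a a' b b' (by
      simp only [Set.mem_ofPred_eq] at ha ha'; omega) hab
    rfl

/-! ### Retractions onto the roots of a cycle -/

section Retract

variable {V : Type*} {G K : SimpleGraph V} {r : V → V}

/-- A walk leaving the branch of its starting vertex passes through the root of that branch. -/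
lemma root_mem_support (hr : ∀ u v, K.Adj u v → r u = r v)
    (hA : ∀ u v, G.Adj u v → K.Adj u v ∨ (r u = u ∧ r v = v)) {u v : V} (p : G.Walk u v)
    (h : r u ≠ r v) : r u ∈ p.support := by
  induction p with
  | nil => exact absurd rfl h
  | cons a p ih =>
    rcases hA _ _ a with h1 | h1
    · rw [hr _ _ h1] at h ⊢
      simp [ih h]
    · simp [h1.1]

lemma root_mem_support' (hr : ∀ u v, K.Adj u v → r u = r v)
    (hA : ∀ u v, G.Adj u v → K.Adj u v ∨ (r u = u ∧ r v = v)) {u v : V} (p : G.Walk u v)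
    (h : r u ≠ r v) : r v ∈ p.support := by
  simpa using root_mem_support hr hA p.reverse h.symm

/-- A path with both endpoints in the same branch stays in that branch. -/
lemma edges_of_root_eq (hr : ∀ u v, K.Adj u v → r u = r v)
    (hA : ∀ u v, G.Adj u v → K.Adj u v ∨ (r u = u ∧ r v = v)) {u v : V} (p : G.Walk u v)
    (hp : p.IsPath) (h : r u = r v) : ∀ e ∈ p.edges, e ∈ K.edgeSet := by
  induction p with
  | nil => simp
  | @cons x y z a p ih =>
    rw [Walk.cons_isPath_iff] at hp
    rcases hA _ _ a with h1 | h1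
    · simp only [Walk.edges_cons, List.mem_cons, forall_eq_or_imp]
      exact ⟨h1, ih hp.1 (by rw [← hr _ _ h1, h])⟩
    · by_cases h2 : r y = r z
      · exact absurd (h1.1.symm.trans (h.trans (h2.symm.trans h1.2))) a.ne
      · have := root_mem_support' hr hA p h2
        rw [← h, h1.1] at this
        exact absurd this hp.2

/-- A path between two distinct roots uses no edge inside a branch. -/
lemma edges_of_roots (hr : ∀ u v, K.Adj u v → r u = r v)
    (hA : ∀ u v, G.Adj u v → K.Adj u v ∨ (r u = u ∧ r v = v)) {u v : V} (p : G.Walk u v)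
    (hp : p.IsPath) (hu : r u = u) (hv : r v = v) : ∀ e ∈ p.edges, e ∉ K.edgeSet := by
  induction p with
  | nil => simp
  | @cons x y z a p ih =>
    rw [Walk.cons_isPath_iff] at hp
    have hxz : x ≠ z := by rintro rfl; exact hp.2 p.end_mem_support
    have hK : ¬ K.Adj x y := by
      intro h1
      have h2 := hr _ _ h1
      have := root_mem_support hr hA p (by rw [← h2, hu, hv]; exact hxz)
      rw [← h2, hu] at this
      exact hp.2 this
    simp only [Walk.edges_cons, List.mem_cons, forall_eq_or_imp]
    refine ⟨hK, ih hp.1 ?_ hv⟩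
    exact ((hA _ _ a).resolve_left hK).2

/-- The number of geodesics factors through the roots of the two branches involved. -/
lemma numGeodesics_factor [DecidableEq V] (hG : G.Connected)
    (hr : ∀ u v, K.Adj u v → r u = r v) (hrr : ∀ u, r (r u) = r u)
    (hA : ∀ u v, G.Adj u v → K.Adj u v ∨ (r u = u ∧ r v = v)) {u v : V} (h : r u ≠ r v) :
    numGeodesics G u v =
      numGeodesics G u (r u) * (numGeodesics G (r u) (r v) * numGeodesics G (r v) v) := by
  rw [numGeodesics_mul hG (fun p => root_mem_support hr hA p h),
    numGeodesics_mul hG (u := r u)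
      (fun p => root_mem_support' hr hA p (by rw [hrr]; exact h))]

/-- Two connected graphs with the same branches: comparing geodesic counts reduces to comparing
them between roots. -/
lemma numGeodesics_le_of_roots [DecidableEq V] {G' : SimpleGraph V} (hG : G.Connected)
    (hG' : G'.Connected) (hKG : K ≤ G) (hKG' : K ≤ G')
    (hr : ∀ u v, K.Adj u v → r u = r v) (hrr : ∀ u, r (r u) = r u)
    (hA : ∀ u v, G.Adj u v → K.Adj u v ∨ (r u = u ∧ r v = v))
    (hA' : ∀ u v, G'.Adj u v → K.Adj u v ∨ (r u = u ∧ r v = v))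
    (hroots : ∀ u v, r u = u → r v = v → u ≠ v → numGeodesics G u v ≤ numGeodesics G' u v)
    (u v : V) : numGeodesics G u v ≤ numGeodesics G' u v := by
  have key : ∀ u v, r u = r v → numGeodesics G u v = numGeodesics G' u v := by
    intro u v h
    rw [numGeodesics_eq_of_paths hKG hG (fun p hp => edges_of_root_eq hr hA p hp h),
      numGeodesics_eq_of_paths hKG' hG' (fun p hp => edges_of_root_eq hr hA' p hp h)]
  by_cases h : r u = r v
  · exact (key u v h).le
  · rw [numGeodesics_factor hG hr hrr hA h, numGeodesics_factor hG' hr hrr hA' h,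
      key u (r u) (hrr u).symm, key (r v) v (hrr v)]
    gcongr
    exact hroots _ _ (hrr u) (hrr v) h

end Retract

/-! ### Geodesics along an odd cycle -/

section Cycle

variable {V : Type*} {G : SimpleGraph V} {n : ℕ} {c : ZMod n → V}

/-- The edge set of the closed walk `c 0, c 1, …, c (n - 1), c 0`. -/
def ringEdges (c : ZMod n → V) : Set (Sym2 V) := Set.range fun i => s(c i, c (i + 1))

lemma getVert_succ_cases (hc : Function.Injective c) {u v : V} (p : G.Walk u v)
    (he : ∀ e ∈ p.edges, e ∈ ringEdges c) {k : ℕ} (hk : k < p.length) {i : ZMod n}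
    (hi : p.getVert k = c i) :
    p.getVert (k + 1) = c (i + 1) ∨ p.getVert (k + 1) = c (i - 1) := by
  have hmem := he _ ((p.mk_mem_edges_iff_exists).2 ⟨k, hk, rfl⟩)
  obtain ⟨j, hj⟩ := hmem
  simp only [hi, Sym2.eq_iff] at hj
  rcases hj with ⟨h1, h2⟩ | ⟨h1, h2⟩
  · left; rw [← h2, hc h1]
  · right; rw [← h1, ← hc h2]; simp

/-- A path along the ring never turns back, so its first step determines it. -/
lemma getVert_of_first_step (hc : Function.Injective c) {u v : V} (p : G.Walk u v)
    (hp : p.IsPath) (he : ∀ e ∈ p.edges, e ∈ ringEdges c) {i ε : ZMod n} (hε : ε = 1 ∨ ε = -1)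
    (h0 : u = c i) (h1 : p.getVert 1 = c (i + ε)) :
    ∀ k ≤ p.length, p.getVert k = c (i + ε * k) := by
  intro k
  induction k using Nat.twoStepInduction with
  | zero => intro _; simpa using h0
  | one => intro _; simpa using h1
  | more k ih0 ih1 =>
    intro hk
    have h2 := ih0 (by omega)
    have h3 := ih1 (by omega)
    have hne : p.getVert (k + 1 + 1) ≠ p.getVert k := by
      intro h
      have := hp.getVert_injOn (by simp; omega) (by simp; omega) h
      omega
    rw [h2] at hne
    have h4 := getVert_succ_cases hc p he (k := k + 1) (by omega) h3
    rcases hε with rfl | rfl <;> rcases h4 with h4 | h4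
    · rw [h4]; congr 1; push_cast; ring
    · refine absurd ?_ hne
      rw [h4]; congr 1; push_cast; ring
    · refine absurd ?_ hne
      rw [h4]; congr 1; push_cast; ring
    · rw [h4]; congr 1; push_cast; ring

/-- On an odd cycle the two arcs joining distinct vertices have different lengths, so paths of
equal length along the cycle coincide. -/
lemma ring_path_unique [NeZero n] (hn : Odd n) (hc : Function.Injective c) {u v : V} {i : ZMod n}
    (hu : u = c i) (huv : u ≠ v) (p q : G.Walk u v) (hp : p.IsPath) (hq : q.IsPath)
    (hep : ∀ e ∈ p.edges, e ∈ ringEdges c) (heq : ∀ e ∈ q.edges, e ∈ ringEdges c)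
    (hl : p.length = q.length) : p = q := by
  have hpos : 0 < p.length := by
    by_contra h
    exact huv (Walk.eq_of_length_eq_zero (by omega : p.length = 0))
  have key : ∀ p : G.Walk u v, p.IsPath → (∀ e ∈ p.edges, e ∈ ringEdges c) → 0 < p.length →
      ∃ ε : ZMod n, (ε = 1 ∨ ε = -1) ∧ ∀ k ≤ p.length, p.getVert k = c (i + ε * k) := by
    intro p hp he hpos
    have h0 : p.getVert 0 = c i := by simpa using hu
    rcases getVert_succ_cases hc p he hpos h0 with h1 | h1
    · exact ⟨1, Or.inl rfl, getVert_of_first_step hc p hp he (Or.inl rfl) hu h1⟩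
    · exact ⟨-1, Or.inr rfl, getVert_of_first_step hc p hp he (Or.inr rfl) hu
        (by rw [sub_eq_add_neg] at h1; exact h1)⟩
  obtain ⟨ε, hε, h1⟩ := key p hp hep hpos
  obtain ⟨δ, hδ, h2⟩ := key q hq heq (hl ▸ hpos)
  have hsame : ε = δ := by
    by_contra hne
    have hv1 := h1 _ le_rfl
    have hv2 := h2 _ le_rfl
    rw [Walk.getVert_length] at hv1 hv2
    rw [← hl] at hv2
    have h3 := hc (hv1.symm.trans hv2)
    have h4 : (2 : ZMod n) * p.length = 0 := by
      rcases hε with rfl | rfl <;> rcases hδ with rfl | rfl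
      · exact absurd rfl hne
      · linear_combination h3
      · linear_combination -h3
      · exact absurd rfl hne
    have h5 : n ∣ 2 * p.length := (ZMod.natCast_eq_zero_iff _ _).1 (by exact_mod_cast h4)
    have h6 : n ∣ p.length := (Nat.Coprime.dvd_of_dvd_mul_left (by
      exact (Nat.coprime_two_right.2 hn)) h5)
    have h7 : ((p.length : ℕ) : ZMod n) = 0 := (ZMod.natCast_eq_zero_iff _ _).2 h6
    rw [h7] at hv1
    apply huv
    rw [hv1, hu]; simp
  subst hsame
  exact Walk.ext_getVert_le_length hl fun k hk => by rw [h1 k hk, h2 k (hl ▸ hk)]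

lemma numGeodesics_le_one_of_ring [Fintype V] [DecidableEq V] [NeZero n] (hn : Odd n)
    (hc : Function.Injective c) {u v : V} {i : ZMod n} (hu : u = c i) (huv : u ≠ v)
    (h : ∀ p : G.Walk u v, p.IsPath → ∀ e ∈ p.edges, e ∈ ringEdges c) :
    numGeodesics G u v ≤ 1 := by
  refine (Set.ncard_le_one (finite_geodesics G u v)).2 ?_
  rintro p ⟨hp, hpl⟩ q ⟨hq, hql⟩
  exact ring_path_unique hn hc hu huv p q hp hq (h p hp) (h q hq) (hpl.trans hql.symm)

lemma natCast_ne_zero_of_lt {k : ℕ} (h0 : 0 < k) (h : k < n) : (k : ZMod n) ≠ 0 := fun h1 =>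
  absurd (Nat.le_of_dvd h0 ((ZMod.natCast_eq_zero_iff _ _).1 h1)) (by omega)

lemma ring_edge_inj (hn : 3 ≤ n) (hc : Function.Injective c) {i j : ZMod n}
    (h : s(c i, c (i + 1)) = s(c j, c (j + 1))) : i = j := by
  simp only [Sym2.eq_iff] at h
  rcases h with ⟨h1, _⟩ | ⟨h1, h2⟩
  · exact hc h1
  · have h3 := hc h1
    have h4 := hc h2
    exfalso
    apply natCast_ne_zero_of_lt (n := n) (k := 2) (by norm_num) (by omega)
    push_cast
    linear_combination -h3 + h4

/-- A cycle of length `n`, listed by `ZMod n`. -/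
lemma exists_ring {u : V} (w : G.Walk u u) (hw : w.IsCycle) :
    ∃ c : ZMod w.length → V, Function.Injective c ∧ (∀ i, G.Adj (c i) (c (i + 1))) ∧
      ringEdges c = {e | e ∈ w.edges} := by
  have h3 := hw.three_le_length
  have : NeZero w.length := ⟨by omega⟩
  have h1 : (1 : ZMod w.length).val = 1 := by
    have := ZMod.val_natCast w.length 1
    rw [Nat.mod_eq_of_lt (by omega)] at this
    simpa using this
  have hsucc : ∀ i : ZMod w.length, w.getVert (i + 1).val = w.getVert (i.val + 1) := by
    intro i
    have hlt := ZMod.val_lt i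
    rw [ZMod.val_add, h1]
    rcases (by omega : i.val + 1 < w.length ∨ i.val + 1 = w.length) with h | h
    · rw [Nat.mod_eq_of_lt h]
    · rw [h, Nat.mod_self]; simp
  refine ⟨fun i => w.getVert i.val, ?_, ?_, ?_⟩
  · intro i j hij
    have hi := ZMod.val_lt i
    have hj := ZMod.val_lt j
    exact ZMod.val_injective _ (hw.getVert_injOn' (by simp; omega) (by simp; omega) hij)
  · intro i
    simp only [hsucc]
    exact w.adj_getVert_succ (ZMod.val_lt i)
  · ext e
    induction e with
    | h x y =>
    simp only [ringEdges, Set.mem_range, hsucc, Set.mem_ofPred_eq, Walk.mk_mem_edges_iff_exists]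
    constructor
    · rintro ⟨i, hi⟩
      exact ⟨i.val, ZMod.val_lt i, hi⟩
    · rintro ⟨k, hk, h⟩
      refine ⟨(k : ZMod w.length), ?_⟩
      rw [ZMod.val_natCast, Nat.mod_eq_of_lt hk]
      exact h

end Cycle

/-! ### Cycles after adding an edge -/

section AddEdge

variable {V : Type*} {H : SimpleGraph V} {a b : V}

lemma finite_cycleEdgeSets [Finite V] (G : SimpleGraph V) : (cycleEdgeSets G).Finite :=
  Set.toFinite _

lemma cycleEdgeSets_mono {G : SimpleGraph V} (h : H ≤ G) : cycleEdgeSets H ⊆ cycleEdgeSets G := by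
  rintro _ ⟨u, w, hw, rfl⟩
  exact ⟨u, w.mapLe h, hw.mapLe h, by simp⟩

lemma subset_edgeSet_of_mem_cycleEdgeSets {G : SimpleGraph V} {s : Set (Sym2 V)}
    (h : s ∈ cycleEdgeSets G) : s ⊆ G.edgeSet := by
  obtain ⟨u, w, hw, rfl⟩ := h
  exact fun e he => w.edges_subset_edgeSet he

/-- Removing an edge from a cycle through it leaves a path between its ends. -/
lemma exists_path_of_cycle [DecidableEq V] {G : SimpleGraph V} {u : V} (w : G.Walk u u)
    (hw : w.IsCycle) (he : s(a, b) ∈ w.edges) :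
    ∃ p : G.Walk a b, p.IsPath ∧ s(a, b) ∉ p.edges ∧
      {e | e ∈ w.edges} = insert s(a, b) {e | e ∈ p.edges} := by
  have first : ∀ w : G.Walk a a, w.IsCycle → w.snd = b →
      ∃ p : G.Walk a b, p.IsPath ∧ s(a, b) ∉ p.edges ∧
        {e | e ∈ w.edges} = insert s(a, b) {e | e ∈ p.edges} := by
    intro w hw hb
    cases w with
    | nil => simp at hw
    | cons h p =>
      simp only [Walk.snd_cons] at hb
      subst hb
      rw [Walk.cons_isCycle_iff] at hw
      refine ⟨p.reverse, hw.1.reverse, by simpa using hw.2, ?_⟩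
      ext e; simp
  have ha : a ∈ w.support := w.fst_mem_support_of_mem_edges he
  have hrot : {e | e ∈ w.edges} = {e | e ∈ (w.rotate a ha).edges} := by
    ext e; exact (w.rotate_edges a ha).mem_iff.symm
  rw [hrot]
  have he' : s(a, b) ∈ (w.rotate a ha).edges := (w.rotate_edges a ha).mem_iff.2 he
  have hw' := hw.rotate ha
  generalize w.rotate a ha = w' at he' hw'
  by_cases hs : w'.snd = b
  · exact first w' hw' hs
  · have : w'.reverse.snd = b := by
      cases w' with
      | nil => simp at hw'
      | cons h p =>
        rw [Walk.cons_isCycle_iff] at hw'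
        simp only [Walk.edges_cons, List.mem_cons] at he'
        simp only [Walk.snd_cons] at hs
        have hmem : s(a, b) ∈ p.edges := he'.resolve_left (by
          intro h1
          simp only [Sym2.eq_iff] at h1
          rcases h1 with ⟨_, h1⟩ | ⟨h1, _⟩
          · exact hs h1.symm
          · exact h.ne h1)
        rw [hw'.1.eq_penultimate_of_mem_edges hmem]
        have hp : ¬ p.Nil := by
          intro hnil
          rw [Walk.edges_eq_nil.2 hnil] at hmem
          simp at hmem
        rw [Walk.snd_reverse, Walk.penultimate_cons_of_not_nil _ _ hp]
    obtain ⟨p, h1, h2, h3⟩ := first w'.reverse hw'.reverse this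
    exact ⟨p, h1, h2, by rw [← h3]; ext e; simp⟩

/-- If all paths between two non-adjacent vertices have the same edges, joining the vertices
creates exactly one new cycle. -/
lemma cycleEdgeSets_sup_edge [DecidableEq V] (hab : a ≠ b) (hnadj : ¬ H.Adj a b)
    (hreach : H.Reachable a b) {S : Set (Sym2 V)}
    (hS : ∀ p : H.Walk a b, p.IsPath → {e | e ∈ p.edges} = S) :
    cycleEdgeSets (H ⊔ edge a b) = insert (insert s(a, b) S) (cycleEdgeSets H) := by
  have hedge : ∀ e ∈ (H ⊔ edge a b).edgeSet, e ≠ s(a, b) → e ∈ H.edgeSet := by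
    intro e he hne
    rw [edgeSet_sup] at he
    exact he.resolve_right fun h => hne (edgeSet_edge_subset h)
  ext T
  constructor
  · rintro ⟨u, w, hw, rfl⟩
    by_cases he : s(a, b) ∈ w.edges
    · obtain ⟨p, hp, hn, heq⟩ := exists_path_of_cycle w hw he
      have hpH : ∀ e ∈ p.edges, e ∈ H.edgeSet := fun e h =>
        hedge e (p.edges_subset_edgeSet h) (by rintro rfl; exact hn h)
      left
      rw [heq, ← hS (p.transfer H hpH) (hp.transfer hpH)]
      simp
    · right
      have hwH : ∀ e ∈ w.edges, e ∈ H.edgeSet := fun e h =>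
        hedge e (w.edges_subset_edgeSet h) (by rintro rfl; exact he h)
      exact ⟨u, w.transfer H hwH, hw.transfer hwH, by simp⟩
  · rintro (rfl | hT)
    · obtain ⟨p, hp⟩ := hreach.exists_isPath
      have hadj : (H ⊔ edge a b).Adj b a := by
        simp [edge_adj, hab.symm]
      refine ⟨b, Walk.cons hadj (p.mapLe le_sup_left), ?_, ?_⟩
      · rw [Walk.cons_isCycle_iff]
        refine ⟨hp.mapLe _, ?_⟩
        rw [Walk.edges_mapLe_eq_edges, Sym2.eq_swap]
        exact fun h => hnadj (p.edges_subset_edgeSet h)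
      · rw [← hS p hp]
        ext e
        simp [Sym2.eq_swap]
    · exact cycleEdgeSets_mono le_sup_left hT

end AddEdge

/-! ### A cycle of a cactus -/

section Cactus

variable {V : Type*} {G : SimpleGraph V} {n : ℕ} {c : ZMod n → V}

/-- In a cactus, a cycle sharing an edge with the given one has the same edges. -/
lemma edges_eq_ringEdges (hG : IsCactus G) (hcyc : ringEdges c ∈ cycleEdgeSets G) {u : V}
    (w : G.Walk u u) (hw : w.IsCycle) {e : Sym2 V} (he : e ∈ w.edges) (he' : e ∈ ringEdges c) :
    {e | e ∈ w.edges} = ringEdges c := by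
  by_contra hne
  exact Set.disjoint_left.1 (hG.2 ⟨u, w, hw, rfl⟩ hcyc hne) he he'

lemma ring_mem (i : ZMod n) : s(c i, c (i + 1)) ∈ ringEdges c := ⟨i, rfl⟩

lemma ring_mem_pred (i : ZMod n) : s(c (i - 1), c i) ∈ ringEdges c := ⟨i - 1, by simp⟩

/-- Distinct vertices of a cycle of a cactus lie in different components once the edges of the
cycle are removed: otherwise some edge of the cycle lies on a second cycle avoiding a neighbouring
edge. -/
lemma ring_separated [NeZero n] (hn : 5 ≤ n) (hG : IsCactus G) (hc : Function.Injective c)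
    (hadj : ∀ i, G.Adj (c i) (c (i + 1))) (hcyc : ringEdges c ∈ cycleEdgeSets G) {i j : ZMod n}
    (h : (G.deleteEdges (ringEdges c)).Reachable (c i) (c j)) : i = j := by
  by_contra hij
  set G2 := G.deleteEdges {s(c (i - 1), c i)} with hG2
  set G3 := G2.deleteEdges {s(c i, c (i + 1))} with hG3
  have hne : s(c i, c (i + 1)) ≠ s(c (i - 1), c i) := by
    intro h1
    have h2 := ring_edge_inj (by omega) hc (i := i) (j := i - 1) (by simpa using h1)
    apply natCast_ne_zero_of_lt (n := n) (k := 1) (by norm_num) (by omega)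
    push_cast
    linear_combination h2
  have hK : G.deleteEdges (ringEdges c) ≤ G3 := by
    intro x y hxy
    rw [deleteEdges_adj] at hxy
    simp only [hG3, hG2, deleteEdges_adj, Set.mem_singleton_iff]
    refine ⟨⟨hxy.1, ?_⟩, ?_⟩
    · intro h1; exact hxy.2 (h1 ▸ ring_mem_pred i)
    · intro h1; exact hxy.2 (h1 ▸ ring_mem i)
  have harc : ∀ k : ℕ, k + 1 < n → G3.Reachable (c (i + 1)) (c (i + 1 + k)) := by
    intro k
    induction k with
    | zero => intro _; simp
    | succ k ih =>
      intro hk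
      refine (ih (by omega)).trans (Adj.reachable ?_)
      have h0 := hadj (i + 1 + k)
      have hk1 := natCast_ne_zero_of_lt (n := n) (k := k + 1) (by omega) (by omega)
      have hk2 := natCast_ne_zero_of_lt (n := n) (k := k + 2) (by omega) (by omega)
      have e1 : i + 1 + ((k + 1 : ℕ) : ZMod n) = i + 1 + k + 1 := by push_cast; ring
      rw [e1]
      simp only [hG3, hG2, deleteEdges_adj, Set.mem_singleton_iff]
      refine ⟨⟨h0, ?_⟩, ?_⟩
      · intro h1
        have h2 := ring_edge_inj (by omega) hc (i := i + 1 + k) (j := i - 1) (by simpa using h1)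
        apply hk2; push_cast; linear_combination h2
      · intro h1
        have h2 := ring_edge_inj (by omega) hc h1
        apply hk1; push_cast; linear_combination h2
  have hlast : G3.Reachable (c (i + 1)) (c j) := by
    have hlt := ZMod.val_lt (j - i - 1)
    have hval : (((j - i - 1).val : ℕ) : ZMod n) = j - i - 1 := ZMod.natCast_zmod_val _
    have hj : i + 1 + ((j - i - 1).val : ZMod n) = j := by rw [hval]; ring
    have := harc (j - i - 1).val (by
      by_contra hcon
      have h1 : (j - i - 1).val + 1 = n := by omega
      have h2 : (((j - i - 1).val + 1 : ℕ) : ZMod n) = 0 := by rw [h1]; simp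
      push_cast at h2
      rw [hval] at h2
      exact hij (by linear_combination -h2))
    rwa [hj] at this
  have hreach : G3.Reachable (c i) (c (i + 1)) := (h.mono hK).trans hlast.symm
  have hadj2 : G2.Adj (c i) (c (i + 1)) := by
    simp only [hG2, deleteEdges_adj, Set.mem_singleton_iff]
    exact ⟨hadj i, hne⟩
  obtain ⟨u, w, hw, he⟩ := adj_and_reachable_delete_edges_iff_exists_cycle.1 ⟨hadj2, hreach⟩
  have hle : G2 ≤ G := deleteEdges_le _
  have h5 := edges_eq_ringEdges hG hcyc (w.mapLe hle) (hw.mapLe hle) (e := s(c i, c (i + 1)))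
    (by simpa using he) (ring_mem i)
  have h6 : s(c (i - 1), c i) ∈ w.edges := by
    have : s(c (i - 1), c i) ∈ {e | e ∈ (w.mapLe hle).edges} := h5 ▸ ring_mem_pred i
    simpa using this
  have h7 := w.edges_subset_edgeSet h6
  simp [hG2] at h7

/-- Every vertex hangs off some vertex of the cycle. -/
lemma exists_ring_reachable (hG : G.Connected) (u : V) :
    ∃ i, (G.deleteEdges (ringEdges c)).Reachable u (c i) := by
  obtain ⟨p⟩ := hG.preconnected u (c 0)
  generalize hz : c 0 = z at p
  induction p with
  | nil => exact ⟨0, hz ▸ Reachable.refl _⟩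
  | @cons x y z h p ih =>
    by_cases he : s(x, y) ∈ ringEdges c
    · obtain ⟨i, hi⟩ := he
      simp only [Sym2.eq_iff] at hi
      rcases hi with ⟨h1, _⟩ | ⟨_, h1⟩
      · exact ⟨i, h1 ▸ Reachable.refl _⟩
      · exact ⟨i + 1, h1 ▸ Reachable.refl _⟩
    · obtain ⟨i, hi⟩ := ih hz
      refine ⟨i, Reachable.trans (Adj.reachable ?_) hi⟩
      rw [deleteEdges_adj]
      exact ⟨h, he⟩

/-- Any path from `c (-1)` to `c 1` avoiding the edge between `c (-1)` and `c 0` runs along the long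
arc of the cycle: extended by `c 0`, it closes up to a cycle sharing an edge with the given one. -/
lemma path_edges_of_delete [DecidableEq V] (hn : 5 ≤ n) (hG : IsCactus G)
    (hc : Function.Injective c) (hadj : ∀ i, G.Adj (c i) (c (i + 1)))
    (hcyc : ringEdges c ∈ cycleEdgeSets G)
    (Q : (G.deleteEdges {s(c (-1), c 0)}).Walk (c (-1)) (c 1)) (hQ : Q.IsPath) :
    {e | e ∈ Q.edges} = ringEdges c \ {s(c (-1), c 0), s(c 0, c 1)} := by
  have h2 := natCast_ne_zero_of_lt (n := n) (k := 2) (by omega) (by omega)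
  have h1 := natCast_ne_zero_of_lt (n := n) (k := 1) (by omega) (by omega)
  push_cast at h1 h2
  have hle : G.deleteEdges {s(c (-1), c 0)} ≤ G := deleteEdges_le _
  have hGab : G.Adj (c 0) (c (-1)) := by simpa using (hadj (-1)).symm
  have hab : s(c (-1), c 0) ∈ ringEdges c := ⟨-1, by simp⟩
  have hbd : s(c 0, c 1) ∈ ringEdges c := ⟨0, by simp⟩
  have h10 : c 1 ≠ c 0 := fun h => h1 (hc h)
  have hm10 : c (-1) ≠ c 0 := fun h => h1 (by linear_combination -hc h)
  have h1m : c 1 ≠ c (-1) := fun h => h2 (by linear_combination hc h)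
  have hsne : s(c 0, c 1) ≠ s(c (-1), c 0) := by
    simp only [ne_eq, Sym2.eq_iff, not_or, not_and]
    exact ⟨fun h => absurd h.symm hm10, fun _ => h1m⟩
  have hnotmem : ∀ {x y : V} (p : (G.deleteEdges {s(c (-1), c 0)}).Walk x y),
      s(c (-1), c 0) ∉ p.edges := by
    intro x y p h
    have := p.edges_subset_edgeSet h
    simp at this
  -- a path between the ends of the deleted edge closes up to the given cycle
  have key : ∀ p : (G.deleteEdges {s(c (-1), c 0)}).Walk (c (-1)) (c 0), p.IsPath →
      insert s(c (-1), c 0) {e | e ∈ p.edges} = ringEdges c := by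
    intro p hp
    have hw : (Walk.cons hGab (p.mapLe hle)).IsCycle := by
      rw [Walk.cons_isCycle_iff]
      refine ⟨hp.mapLe hle, ?_⟩
      rw [Walk.edges_mapLe_eq_edges]
      intro h
      exact hnotmem p ((congrArg (· ∈ p.edges) Sym2.eq_swap).mp h)
    rw [← edges_eq_ringEdges hG hcyc _ hw (e := s(c (-1), c 0)) (by simp [Sym2.eq_swap]) hab]
    ext e
    simp [Sym2.eq_swap]
  by_cases hb : c 0 ∈ Q.support
  · exfalso
    have h3 := key (Q.takeUntil _ hb) (hQ.takeUntil hb)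
    rw [← h3] at hbd
    rcases hbd with h4 | h4
    · exact hsne h4
    · exact Walk.endpoint_notMem_support_takeUntil hQ hb h10
        (Walk.snd_mem_support_of_mem_edges _ h4)
  · have hH : (G.deleteEdges {s(c (-1), c 0)}).Adj (c 1) (c 0) := by
      rw [deleteEdges_adj]
      refine ⟨by simpa using (hadj 0).symm, ?_⟩
      rw [Set.mem_singleton_iff, Sym2.eq_swap]
      exact hsne
    have h3 := key (Q.concat hH) (hQ.concat hb hH)
    rw [← h3]
    ext e
    simp only [Walk.edges_concat, Set.mem_ofPred_eq, List.concat_eq_append, List.mem_append,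
      List.mem_singleton, Set.mem_sdiff, Set.mem_insert_iff, Set.mem_singleton_iff, not_or]
    rw [Sym2.eq_swap (a := c 1)]
    constructor
    · intro he
      refine ⟨Or.inr (Or.inl he), ?_, ?_⟩
      · rintro rfl; exact hnotmem Q he
      · rintro rfl; exact hb (Walk.fst_mem_support_of_mem_edges _ he)
    · rintro ⟨h4 | h4 | h4, h5, h6⟩
      · exact absurd h4 h5
      · exact h4
      · exact absurd h4 h6

end Cactus

/-! ### Shortcutting the cycle -/

section Shortcut

variable {V : Type*} {G : SimpleGraph V} {n : ℕ} {c : ZMod n → V}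

/-- The graph obtained from `G` by replacing the edge from `c (-1)` to `c 0` by one from `c (-1)`
to `c 1`: the cycle through the `c i` gets shorter by one and `c 0` becomes pendant on it. -/
def shortcut (G : SimpleGraph V) (c : ZMod n → V) : SimpleGraph V :=
  G.deleteEdges {s(c (-1), c 0)} ⊔ edge (c (-1)) (c 1)

lemma shortcut_connected (hG : G.Connected)
    (hcyc : ringEdges c ∈ cycleEdgeSets G) :
    (G.deleteEdges {s(c (-1), c 0)}).Connected ∧ (shortcut G c).Connected := by
  have h1 : (G.deleteEdges {s(c (-1), c 0)}).Connected := by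
    apply hG.connected_delete_edge_of_not_isBridge
    obtain ⟨u, w, hw, h⟩ := hcyc
    have hmem : s(c (-1), c 0) ∈ w.edges := by
      have : s(c (-1), c 0) ∈ ringEdges c := ⟨-1, by simp⟩
      rw [h] at this
      exact this
    exact fun hb => hb.notMem_edges_of_isCycle hw hmem
  exact ⟨h1, h1.mono le_sup_left⟩

/-- Both `G` and its shortcut have exactly one cycle more than `G` without the edge from `c (-1)` to
`c 0`. -/
lemma shortcut_isCactus [Finite V] [DecidableEq V] (hn : 5 ≤ n) (hG : IsCactus G)
    (hc : Function.Injective c) (hadj : ∀ i, G.Adj (c i) (c (i + 1)))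
    (hcyc : ringEdges c ∈ cycleEdgeSets G) :
    IsCactus (shortcut G c) ∧
      (cycleEdgeSets (shortcut G c)).ncard = (cycleEdgeSets G).ncard := by
  obtain ⟨hHc, hG'c⟩ := shortcut_connected hG.1 hcyc
  have h2 := natCast_ne_zero_of_lt (n := n) (k := 2) (by omega) (by omega)
  have h3 := natCast_ne_zero_of_lt (n := n) (k := 3) (by omega) (by omega)
  have h1 := natCast_ne_zero_of_lt (n := n) (k := 1) (by omega) (by omega)
  push_cast at h1 h2 h3
  have hpaths := path_edges_of_delete hn hG hc hadj hcyc
  have h1m : c (-1) ≠ c 1 := fun h => h2 (by linear_combination -hc h)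
  have hab : s(c (-1), c 0) ∈ ringEdges c := ⟨-1, by simp⟩
  set H := G.deleteEdges {s(c (-1), c 0)} with hH
  have hle : H ≤ G := deleteEdges_le _
  have hnotab : ∀ T ∈ cycleEdgeSets H, s(c (-1), c 0) ∉ T := by
    intro T hT h
    have := subset_edgeSet_of_mem_cycleEdgeSets hT h
    simp [hH] at this
  -- an edge joining `c (-1)` and `c 1` would be a path missing the edge from `c 1` to `c 2`
  have hnadj : ¬ H.Adj (c (-1)) (c 1) := by
    intro h
    have h4 := hpaths (Walk.cons h Walk.nil) (by simp [h1m])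
    have h5 : s(c 1, c (1 + 1)) ∈ ringEdges c \ {s(c (-1), c 0), s(c 0, c 1)} := by
      refine ⟨ring_mem 1, ?_⟩
      simp only [Set.mem_insert_iff, Set.mem_singleton_iff, not_or]
      constructor
      · intro h6
        have h7 := ring_edge_inj (by omega) hc (i := 1) (j := -1) (by simpa using h6)
        exact h2 (by linear_combination h7)
      · intro h6
        have h7 := ring_edge_inj (by omega) hc (i := 1) (j := 0) (by simpa using h6)
        exact h1 h7
    rw [← h4] at h5
    simp only [Walk.edges_cons, Walk.edges_nil, Set.mem_ofPred_eq, List.mem_singleton,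
      Sym2.eq_iff] at h5
    rcases h5 with ⟨h6, _⟩ | ⟨_, h6⟩
    · exact h1m h6.symm
    · exact h3 (by linear_combination hc h6)
  have hcycG' : cycleEdgeSets (shortcut G c) = insert (insert s(c (-1), c 1)
      (ringEdges c \ {s(c (-1), c 0), s(c 0, c 1)})) (cycleEdgeSets H) :=
    cycleEdgeSets_sup_edge h1m hnadj (hHc.preconnected _ _) hpaths
  have hcycG : cycleEdgeSets G = insert (ringEdges c) (cycleEdgeSets H) := by
    ext T
    constructor
    · rintro ⟨u, w, hw, rfl⟩
      by_cases he : s(c (-1), c 0) ∈ w.edges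
      · exact Or.inl (edges_eq_ringEdges hG hcyc w hw he hab)
      · right
        have hwH : ∀ e ∈ w.edges, e ∈ H.edgeSet := by
          intro e h
          rw [hH, edgeSet_deleteEdges]
          exact ⟨w.edges_subset_edgeSet h, by rintro rfl; exact he h⟩
        exact ⟨u, w.transfer H hwH, hw.transfer hwH, by simp⟩
    · rintro (rfl | hT)
      · exact hcyc
      · exact cycleEdgeSets_mono hle hT
  have hring : ringEdges c ∉ cycleEdgeSets H := fun h => hnotab _ h hab
  have hnew : ∀ T ∈ cycleEdgeSets H, s(c (-1), c 1) ∉ T := fun T hT h =>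
    hnadj (subset_edgeSet_of_mem_cycleEdgeSets hT h)
  have hdisj : ∀ T ∈ cycleEdgeSets H, Disjoint T
      (insert s(c (-1), c 1) (ringEdges c \ {s(c (-1), c 0), s(c 0, c 1)})) := by
    intro T hT
    rw [Set.disjoint_left]
    rintro e he (rfl | h)
    · exact hnew T hT he
    · have hne : T ≠ ringEdges c := by rintro rfl; exact hring hT
      exact Set.disjoint_left.1 (hG.2 (cycleEdgeSets_mono hle hT) hcyc hne) he h.1
  refine ⟨⟨hG'c, ?_⟩, ?_⟩
  · rw [hcycG', Set.pairwise_insert]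
    refine ⟨hG.2.mono (cycleEdgeSets_mono hle), ?_⟩
    intro T hT _
    exact ⟨(hdisj T hT).symm, hdisj T hT⟩
  · rw [hcycG', hcycG, Set.ncard_insert_of_notMem _ (finite_cycleEdgeSets H),
      Set.ncard_insert_of_notMem hring (finite_cycleEdgeSets H)]
    exact fun h => hnew _ h (Set.mem_insert _ _)

/-- A sequence of successively adjacent vertices is the vertex sequence of a walk. -/
lemma exists_walk_of_adj (Γ : SimpleGraph V) (w : ℕ → V) (m : ℕ)
    (h : ∀ k < m, Γ.Adj (w k) (w (k + 1))) :
    ∃ p : Γ.Walk (w 0) (w m), p.length = m ∧ ∀ k ≤ m, p.getVert k = w k := by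
  induction m generalizing w with
  | zero => exact ⟨Walk.nil, rfl, by simp⟩
  | succ m ih =>
    obtain ⟨p, hp, hk⟩ := ih (fun k => w (k + 1)) (fun k hk => h (k + 1) (by omega))
    refine ⟨Walk.cons (h 0 (by omega)) p, by simp [hp], ?_⟩
    intro k hkm
    cases k with
    | zero => simp
    | succ k => simpa using hk k (by omega)

lemma le_add_length_of_lipschitz {Γ : SimpleGraph V} (f : V → ℕ)
    (hf : ∀ x y, Γ.Adj x y → f y ≤ f x + 1) {u v : V} (p : Γ.Walk u v) :
    f v ≤ f u + p.length := by
  induction p with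
  | nil => simp
  | cons h p ih =>
    have := hf _ _ h
    simp only [Walk.length_cons]
    omega

/-- In the shortened cycle, which is even, `c 1` and its antipode are joined by two geodesics. -/
lemma two_le_numGeodesics_shortcut [Fintype V] [DecidableEq V] {m : ℕ} [NeZero n]
    (hn : n = 2 * m + 1) (hm : 2 ≤ m) (hc : Function.Injective c)
    (hadj : ∀ i, G.Adj (c i) (c (i + 1))) (ρ : V → ZMod n) (hρc : ∀ i, ρ (c i) = i)
    (hρ : ∀ u v, (G.deleteEdges (ringEdges c)).Adj u v → ρ u = ρ v) :
    2 ≤ numGeodesics (shortcut G c) (c 1) (c (1 + m)) := by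
  have hval : ∀ k : ℕ, k < n → ((k : ℕ) : ZMod n).val = k := fun k hk => by
    rw [ZMod.val_natCast, Nat.mod_eq_of_lt hk]
  have hval1 : (1 : ZMod n).val = 1 := by simpa using hval 1 (by omega)
  have hm1 : (-1 : ZMod n) = ((n - 1 : ℕ) : ZMod n) := by
    rw [Nat.cast_sub (by omega)]; simp
  have hvalm1 : (-1 : ZMod n).val = n - 1 := by rw [hm1, hval _ (by omega)]
  have hsucc : ∀ i : ZMod n, i ≠ -1 → (i + 1).val = i.val + 1 := by
    intro i hi
    have hlt := ZMod.val_lt i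
    have hne : i.val ≠ n - 1 := by
      intro h
      exact hi (ZMod.val_injective n (h.trans hvalm1.symm))
    rw [ZMod.val_add, hval1, Nat.mod_eq_of_lt (by omega)]
  have hring : ∀ i : ZMod n, i ≠ -1 → (shortcut G c).Adj (c i) (c (i + 1)) := by
    intro i hi
    refine Or.inl ?_
    rw [deleteEdges_adj]
    refine ⟨hadj i, ?_⟩
    intro h
    exact hi (ring_edge_inj (by omega) hc (by simpa using h))
  have hne2 := natCast_ne_zero_of_lt (n := n) (k := 2) (by omega) (by omega)
  have hne3 := natCast_ne_zero_of_lt (n := n) (k := 3) (by omega) (by omega)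
  push_cast at hne2 hne3
  have hnz : (2 : ZMod n) * m + 1 = 0 := by
    have : ((n : ℕ) : ZMod n) = 0 := by simp
    rw [hn] at this
    subst hn
    exact_mod_cast this
  -- the distance to `c 1` along the shortened cycle, extended to all branches
  let f : V → ℕ := fun x => min ((ρ x).val - 1) (n - (ρ x).val)
  have hf : ∀ x y, (shortcut G c).Adj x y → f y ≤ f x + 1 := by
    have hstep : ∀ i : ZMod n, i ≠ -1 → f (c i) ≤ f (c (i + 1)) + 1 ∧
        f (c (i + 1)) ≤ f (c i) + 1 := by
      intro i hi
      simp only [f, hρc, hsucc i hi]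
      omega
    intro x y hxy
    rcases hxy with h | h
    · rw [deleteEdges_adj] at h
      by_cases he : s(x, y) ∈ ringEdges c
      · obtain ⟨i, hi⟩ := he
        have hi1 : i ≠ -1 := by
          rintro rfl
          apply h.2
          rw [← hi]; simp
        simp only [Sym2.eq_iff] at hi
        rcases hi with ⟨rfl, rfl⟩ | ⟨rfl, rfl⟩
        · exact (hstep i hi1).2
        · exact (hstep i hi1).1
      · have : ρ x = ρ y := hρ x y (by rw [deleteEdges_adj]; exact ⟨h.1, he⟩)
        simp only [f, this]
        omega
    · rw [edge_adj] at h
      rcases h.1 with ⟨rfl, rfl⟩ | ⟨rfl, rfl⟩ <;> simp only [f, hρc, hval1, hvalm1] <;> omega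
  have hdist : ∀ p : (shortcut G c).Walk (c 1) (c (1 + m)), m ≤ p.length := by
    intro p
    have h := le_add_length_of_lipschitz f hf p
    have hv : (1 + m : ZMod n).val = 1 + m := by
      have := hval (1 + m) (by omega)
      rwa [Nat.cast_add, Nat.cast_one] at this
    simp only [f, hρc, hval1, hv] at h
    omega
  obtain ⟨p, hpl, hp⟩ : ∃ p : (shortcut G c).Walk (c 1) (c (1 + m)),
      p.length = m ∧ p.getVert 1 = c 2 := by
    obtain ⟨p, hpl, hp⟩ := exists_walk_of_adj (shortcut G c) (fun k => c (1 + k)) m (by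
      intro k hk
      have h := hring (1 + k) (by
        intro h
        apply natCast_ne_zero_of_lt (n := n) (k := k + 2) (by omega) (by omega)
        push_cast
        linear_combination h)
      have e : (1 : ZMod n) + ((k + 1 : ℕ) : ZMod n) = 1 + k + 1 := by push_cast; ring
      rw [e]
      exact h)
    refine ⟨p.copy (by simp) rfl, by simpa using hpl, ?_⟩
    rw [Walk.getVert_copy, hp 1 (by omega)]
    congr 1; push_cast; ring
  obtain ⟨q, hql, hq⟩ : ∃ q : (shortcut G c).Walk (c 1) (c (1 + m)),
      q.length = m ∧ q.getVert 1 = c (-1) := by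
    obtain ⟨q, hql, hq⟩ := exists_walk_of_adj (shortcut G c)
      (fun k => if k = 0 then c 1 else c (-k)) m (by
      intro k hk
      rcases Nat.eq_zero_or_pos k with rfl | hk0
      · refine Or.inr ?_
        rw [edge_adj]
        simp only [if_true, zero_add, one_ne_zero, if_false, Nat.cast_one]
        refine ⟨by simp, fun h => hne2 (by linear_combination hc h)⟩
      · have h := hring (-k - 1) (by
          intro h
          apply natCast_ne_zero_of_lt (n := n) (k := k) (by omega) (by omega)
          linear_combination -h)
        have e : -((k + 1 : ℕ) : ZMod n) = -k - 1 := by push_cast; ring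
        rw [if_neg (by omega), if_neg (by omega), e]
        have h' := h.symm
        rwa [sub_add_cancel] at h')
    have hend : (if m = 0 then c 1 else c (-m)) = c (1 + m) := by
      rw [if_neg (by omega)]
      congr 1
      linear_combination -hnz
    refine ⟨q.copy (by simp) hend, by simpa using hql, ?_⟩
    rw [Walk.getVert_copy, hq 1 (by omega)]
    simp
  have hd : (shortcut G c).dist (c 1) (c (1 + m)) = m := by
    refine le_antisymm ((SimpleGraph.dist_le p).trans hpl.le) ?_
    obtain ⟨w, hw⟩ := p.reachable.exists_walk_length_eq_dist
    exact hw ▸ hdist w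
  refine (Set.one_lt_ncard (finite_geodesics _ _ _)).2
    ⟨p, (mem_geodesics_iff p).2 (hpl.trans hd.symm), q,
      (mem_geodesics_iff q).2 (hql.trans hd.symm), ?_⟩
  rintro rfl
  exact hne3 (by linear_combination hc (hp.symm.trans hq))

/-- Shortcutting an odd cycle of a cactus decreases no geodesic count, because the counts between
vertices of the odd cycle were all `1`, and it increases the count of an antipodal pair. -/
lemma gpn_lt_gpn_shortcut [Fintype V] [DecidableEq V] [NeZero n] (hodd : Odd n) (hn : 5 ≤ n)
    (hG : IsCactus G) (hc : Function.Injective c) (hadj : ∀ i, G.Adj (c i) (c (i + 1)))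
    (hcyc : ringEdges c ∈ cycleEdgeSets G) : gpn G < gpn (shortcut G c) := by
  obtain ⟨-, hG'⟩ := shortcut_connected hG.1 hcyc
  obtain ⟨m, hm⟩ := hodd
  choose ρ hρ using exists_ring_reachable (c := c) hG.1
  have hsep := fun i j => ring_separated (i := i) (j := j) hn hG hc hadj hcyc
  set K := G.deleteEdges (ringEdges c) with hK
  have hρc : ∀ i, ρ (c i) = i := fun i => (hsep _ _ (hρ (c i))).symm
  have hρadj : ∀ u v, K.Adj u v → ρ u = ρ v := fun u v h =>
    hsep _ _ ((hρ u).symm.trans (h.reachable.trans (hρ v)))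
  have hKG : K ≤ G := deleteEdges_le _
  have hab : s(c (-1), c 0) ∈ ringEdges c := ⟨-1, by simp⟩
  have hKG' : K ≤ shortcut G c := by
    refine le_trans ?_ le_sup_left
    exact deleteEdges_anti (Set.singleton_subset_iff.2 hab)
  have hr : ∀ u v, K.Adj u v → c (ρ u) = c (ρ v) := fun u v h => by rw [hρadj u v h]
  have hrr : ∀ u, c (ρ (c (ρ u))) = c (ρ u) := fun u => by rw [hρc]
  have hA : ∀ u v, G.Adj u v → K.Adj u v ∨ (c (ρ u) = u ∧ c (ρ v) = v) := by
    intro u v h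
    by_cases he : s(u, v) ∈ ringEdges c
    · right
      obtain ⟨i, hi⟩ := he
      simp only [Sym2.eq_iff] at hi
      rcases hi with ⟨rfl, rfl⟩ | ⟨rfl, rfl⟩ <;> simp [hρc]
    · left
      rw [hK, deleteEdges_adj]
      exact ⟨h, he⟩
  have hA' : ∀ u v, (shortcut G c).Adj u v → K.Adj u v ∨ (c (ρ u) = u ∧ c (ρ v) = v) := by
    intro u v h
    rcases h with h | h
    · exact hA u v (deleteEdges_le _ h)
    · right
      rw [edge_adj] at h
      rcases h.1 with ⟨rfl, rfl⟩ | ⟨rfl, rfl⟩ <;> simp [hρc]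
  have hone : ∀ u v, c (ρ u) = u → c (ρ v) = v → u ≠ v → numGeodesics G u v ≤ 1 := by
    intro u v hu hv huv
    refine numGeodesics_le_one_of_ring ⟨m, hm⟩ hc hu.symm huv ?_
    intro p hp e he
    have h1 := edges_of_roots (r := fun x => c (ρ x)) hr hA p hp hu hv e he
    by_contra h2
    rw [hK, edgeSet_deleteEdges] at h1
    exact h1 ⟨p.edges_subset_edgeSet he, h2⟩
  have hle := numGeodesics_le_of_roots (r := fun x => c (ρ x)) hG.1 hG' hKG hKG' hr hrr hA hA'
    (fun u v hu hv huv => (hone u v hu hv huv).trans (one_le_numGeodesics hG' u v))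
  have hne : c 1 ≠ c (1 + m) := by
    intro h
    apply natCast_ne_zero_of_lt (n := n) (k := m) (by omega) (by omega)
    linear_combination -hc h
  have hlt : numGeodesics G (c 1) (c (1 + m)) < numGeodesics (shortcut G c) (c 1) (c (1 + m)) :=
    lt_of_le_of_lt (hone _ _ (by rw [hρc]) (by rw [hρc]) hne)
      (two_le_numGeodesics_shortcut hm (by omega) hc hadj ρ hρc hρadj)
  unfold gpn
  apply Nat.add_lt_add_right
  apply Finset.sum_lt_sum
  · intro e _
    induction e with
    | h u v => exact hle u v
  · refine ⟨s(c 1, c (1 + m)), ?_, hlt⟩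
    simpa using hne

end Shortcut

/-- if a cactus `G` on `n` vertices with `k` cycles contains a cycle of odd
length at least `5`, then some cactus `G'` on `n` vertices with `k` cycles has a strictly
larger geodesic subpath number. -/
theorem cactus_odd_cycle_not_maximal {V : Type*} [Fintype V] [DecidableEq V]
    (G : SimpleGraph V) (k : ℕ) (hG : IsCactus G) (hk : (cycleEdgeSets G).ncard = k)
    (hodd : ∃ (u : V) (c : G.Walk u u), c.IsCycle ∧ Odd c.length ∧ 5 ≤ c.length) :
    ∃ G' : SimpleGraph V, IsCactus G' ∧ (cycleEdgeSets G').ncard = k ∧ gpn G < gpn G' := by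
  obtain ⟨u, w, hw, hwodd, hw5⟩ := hodd
  have : NeZero w.length := ⟨by omega⟩
  obtain ⟨c, hc, hadj, hring⟩ := exists_ring w hw
  have hcyc : ringEdges c ∈ cycleEdgeSets G := ⟨u, w, hw, hring⟩
  obtain ⟨h1, h2⟩ := shortcut_isCactus hw5 hG hc hadj hcyc
  exact ⟨shortcut G c, h1, h2.trans hk, gpn_lt_gpn_shortcut hwodd hw5 hG hc hadj hcyc⟩
end
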